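/- For every integer b ≥ 2 and every integer k with 1 ≤ k ≤ b − 1, limsup_{N→∞} P_{b,N}(k) = b/((k+1)(b − 1)). -/

import Mathlib

/-- The leading digit of `x` in base `b`: `⌊x / b^⌊log_b x⌋⌋`. -/
def leadingDigit (b x : ℕ) : ℕ := x / b ^ Nat.log b x

/-- `P b N k` is the frequency of leading digit `k` among `1, …, N` in base `b`. -/
noncomputable def leadingDigitFreq (b N k : ℕ) : ℝ :=
  (((Finset.Icc 1 N).filter (fun x => leadingDigit b x = k)).card : ℝ) / N

def ldCount (b k N : ℕ) : ℕ :=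
  ((Finset.Icc 1 N).filter (fun x => leadingDigit b x = k)).card

theorem ldCount_succ (b k N : ℕ) :
    ldCount b k (N + 1) = ldCount b k N + if leadingDigit b (N + 1) = k then 1 else 0 := by
  unfold ldCount
  rw [← Finset.insert_Icc_right_eq_Icc_add_one (by omega : 1 ≤ N + 1), Finset.filter_insert]
  split_ifs with h
  · rw [Finset.card_insert_of_notMem (by simp)]
  · simp

theorem ld_iff (b k x n : ℕ) (hb : 2 ≤ b) (h1 : b ^ n ≤ x) (h2 : x < b ^ (n + 1)) :
    leadingDigit b x = k ↔ k * b ^ n ≤ x ∧ x < (k + 1) * b ^ n := by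
  have hp : 0 < b ^ n := by positivity
  have hl : Nat.log b x = n := (Nat.log_eq_iff (Or.inr ⟨by omega, by omega⟩)).2 ⟨h1, h2⟩
  unfold leadingDigit
  rw [hl, ← Nat.le_div_iff_mul_le hp, ← Nat.div_lt_iff_lt_mul hp]
  omega

/-- Counting formula. -/
theorem ldCount_formula (b k : ℕ) (hb : 2 ≤ b) (hk1 : 1 ≤ k) (hk2 : k + 1 ≤ b) (N : ℕ)
    (hN : 1 ≤ N) : ∀ n, b ^ n ≤ N → N < b ^ (n + 1) →
    ldCount b k N = (∑ i ∈ Finset.range n, b ^ i)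
      + (min (N + 1) ((k + 1) * b ^ n) - k * b ^ n) := by
  induction N, hN using Nat.le_induction with
  | base =>
    intro n h1 h2
    have hn : n = 0 := by
      by_contra h
      have := Nat.one_lt_pow h (by omega : 1 < b)
      omega
    subst hn
    have h0 : ldCount b k 0 = 0 := by simp [ldCount]
    have := ldCount_succ b k 0
    rw [h0] at this
    simp only [zero_add] at this
    rw [this]
    have h3 := ld_iff b k 1 0 hb h1 h2
    simp only [pow_zero, mul_one] at h3
    simp only [h3, Finset.range_zero, Finset.sum_empty, pow_zero, mul_one]
    split_ifs <;> omega
  | succ N hN ih =>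
    intro n h1 h2
    rw [ldCount_succ, if_congr (ld_iff b k (N+1) n hb h1 h2) rfl rfl]
    have hp : 0 < b ^ n := by positivity
    have e1 : (k + 1) * b ^ n = k * b ^ n + b ^ n := by ring
    by_cases h : b ^ n ≤ N
    · rw [ih n h (by omega), e1]
      generalize k * b ^ n = u at *
      split_ifs <;> omega
    · have hq : b ^ n = N + 1 := by omega
      obtain ⟨m, rfl⟩ : ∃ m, n = m + 1 := ⟨n - 1, by
        rcases n with _ | n
        · simp at hq; omega
        · rfl⟩
      have hm : b ^ m < b ^ (m + 1) := Nat.pow_lt_pow_right (by omega) (by omega)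
      rw [ih m (by omega) (by omega), Finset.sum_range_succ]
      have e2 : (k + 1) * b ^ m = k * b ^ m + b ^ m := by ring
      have h3 : (k + 1) * b ^ m ≤ b ^ (m + 1) := by
        rw [pow_succ, mul_comm (b ^ m)]; exact Nat.mul_le_mul_right _ hk2
      have h4 : b ^ (m+1) ≤ k * b ^ (m+1) := Nat.le_mul_of_pos_left _ hk1
      rw [e1]
      generalize k * b ^ (m+1) = u at *
      generalize k * b ^ m = v at *
      split_ifs <;> omega

theorem geom_id (b n : ℕ) :
    ((b : ℝ) - 1) * ((∑ i ∈ Finset.range n, b ^ i : ℕ) : ℝ) = (b : ℝ) ^ n - 1 := by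
  push_cast
  rw [mul_comm, geom_sum_mul]

theorem ldCount_upper (b k : ℕ) (hb : 2 ≤ b) (hk1 : 1 ≤ k) (hk2 : k + 1 ≤ b) (N : ℕ)
    (hN : 1 ≤ N) :
    (ldCount b k N : ℝ) * (((k : ℝ) + 1) * ((b : ℝ) - 1)) ≤ b * N + b := by
  have h1 := Nat.pow_log_le_self b (x := N) (by omega)
  have h2 := Nat.lt_pow_succ_log_self (b := b) (by omega) N
  rw [ldCount_formula b k hb hk1 hk2 N hN _ h1 h2]
  generalize Nat.log b N = n at *
  have g := geom_id b n
  push_cast [-Nat.cast_sum] at *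
  generalize ((∑ i ∈ Finset.range n, b ^ i : ℕ) : ℝ) = S at *
  have h1' : (b : ℝ) ^ n ≤ N := by exact_mod_cast h1
  obtain ⟨t, ht⟩ : ∃ t, min (N + 1) ((k + 1) * b ^ n) - k * b ^ n = t := ⟨_, rfl⟩
  rw [ht]
  have e1 : (k + 1) * b ^ n = k * b ^ n + b ^ n := by ring
  have ht2 : t ≤ b ^ n := by omega
  have ht3 : t = 0 ∨ k * b ^ n + t ≤ N + 1 := by omega
  have hb' : (2 : ℝ) ≤ b := by exact_mod_cast hb
  have hk1' : (1 : ℝ) ≤ k := by exact_mod_cast hk1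
  have hk2' : (k : ℝ) + 1 ≤ b := by exact_mod_cast hk2
  have ht2' : (t : ℝ) ≤ (b : ℝ) ^ n := by exact_mod_cast ht2
  have ht0 : (0 : ℝ) ≤ t := by positivity
  have hS : (S + t) * (((k : ℝ) + 1) * (b - 1)) = (k+1) * ((b:ℝ)^n - 1) + (k+1)*(b-1)*t := by
    rw [← g]; ring
  rw [hS]
  have hq : (0 : ℝ) ≤ (b : ℝ) ^ n := by positivity
  rcases ht3 with h | h
  · subst h
    have : ((k:ℝ)+1) * (b:ℝ)^n ≤ b * N := mul_le_mul hk2' h1' hq (by linarith)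
    push_cast
    nlinarith
  · have h' : (k : ℝ) * (b : ℝ) ^ n + t ≤ N + 1 := by exact_mod_cast h
    generalize (b : ℝ) ^ n = q at *
    have h5 : (b : ℝ) * (k * q + t) ≤ b * (N + 1) := mul_le_mul_of_nonneg_left h' (by linarith)
    have h6 : (0:ℝ) ≤ (k * b - (k + 1)) * (q - t) :=
      mul_nonneg (by nlinarith) (by linarith)
    nlinarith

theorem ldCount_lower (b k : ℕ) (hb : 2 ≤ b) (hk1 : 1 ≤ k) (hk2 : k + 1 ≤ b) (n N : ℕ)
    (hN : N + 1 = (k + 1) * b ^ n) :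
    (b : ℝ) * N ≤ (ldCount b k N : ℝ) * (((k : ℝ) + 1) * ((b : ℝ) - 1)) := by
  have e1 : (k + 1) * b ^ n = k * b ^ n + b ^ n := by ring
  have hp : 0 < b ^ n := by positivity
  have h4 : b ^ n ≤ k * b ^ n := Nat.le_mul_of_pos_left _ hk1
  have h3 : (k + 1) * b ^ n ≤ b ^ (n + 1) := by
    rw [pow_succ, mul_comm (b ^ n)]; exact Nat.mul_le_mul_right _ hk2
  rw [ldCount_formula b k hb hk1 hk2 N (by omega) n (by omega) (by omega)]
  have : min (N + 1) ((k + 1) * b ^ n) - k * b ^ n = b ^ n := by omega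
  rw [this]
  have g := geom_id b n
  have hN' : (N : ℝ) + 1 = (k + 1) * (b : ℝ) ^ n := by exact_mod_cast hN
  have hk2' : (k : ℝ) + 1 ≤ b := by exact_mod_cast hk2
  push_cast [-Nat.cast_sum] at *
  generalize ((∑ i ∈ Finset.range n, b ^ i : ℕ) : ℝ) = S at *
  have hS : (S + (b:ℝ)^n) * (((k : ℝ) + 1) * (b - 1))
      = (k+1) * ((b:ℝ)^n - 1) + (k+1)*(b-1)*(b:ℝ)^n := by
    rw [← g]; ring
  rw [hS]
  have : (N : ℝ) = (k + 1) * (b : ℝ) ^ n - 1 := by linarith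
  rw [this]
  nlinarith

theorem freq_limsup (b k : ℕ) (hb : 2 ≤ b) (hk1 : 1 ≤ k) (hk2 : k ≤ b - 1) :
    Filter.limsup (fun N : ℕ => leadingDigitFreq b N k) Filter.atTop
      = (b : ℝ) / (((k : ℝ) + 1) * ((b : ℝ) - 1)) := by
  have hk : k + 1 ≤ b := by omega
  have hb' : (2 : ℝ) ≤ b := by exact_mod_cast hb
  have hD : 0 < ((k : ℝ) + 1) * ((b : ℝ) - 1) := mul_pos (by positivity) (by linarith)
  have hf : ∀ N, leadingDigitFreq b N k = (ldCount b k N : ℝ) / N := fun N => rfl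
  have hup : ∀ᶠ N : ℕ in Filter.atTop, leadingDigitFreq b N k ≤
      (b : ℝ) / (((k : ℝ) + 1) * ((b : ℝ) - 1))
        + (b : ℝ) / (((k : ℝ) + 1) * ((b : ℝ) - 1)) / N := by
    filter_upwards [Filter.eventually_ge_atTop 1] with N hN
    have hN' : (0 : ℝ) < N := by exact_mod_cast hN
    rw [hf, div_le_iff₀ hN', add_mul, div_mul_cancel₀ _ hN'.ne', div_mul_eq_mul_div, ← add_div,
      le_div_iff₀ hD]
    exact ldCount_upper b k hb hk1 hk N hN
  have hlim : Filter.Tendsto (fun N : ℕ => (b : ℝ) / (((k : ℝ) + 1) * ((b : ℝ) - 1))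
        + (b : ℝ) / (((k : ℝ) + 1) * ((b : ℝ) - 1)) / N) Filter.atTop
        (nhds ((b : ℝ) / (((k : ℝ) + 1) * ((b : ℝ) - 1)))) := by
    simpa using (tendsto_const_nhds (x := (b : ℝ) / (((k : ℝ) + 1) * ((b : ℝ) - 1)))).add
      (tendsto_const_div_atTop_nhds_zero_nat ((b : ℝ) / (((k : ℝ) + 1) * ((b : ℝ) - 1))))
  have hfreq : ∃ᶠ N : ℕ in Filter.atTop,
      (b : ℝ) / (((k : ℝ) + 1) * ((b : ℝ) - 1)) ≤ leadingDigitFreq b N k := by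
    rw [Filter.frequently_atTop]
    intro a
    have h1 : a < b ^ a := Nat.lt_pow_self (by omega)
    have h2 : b ^ a ≤ k * b ^ a := Nat.le_mul_of_pos_left _ hk1
    have e1 : (k + 1) * b ^ a = k * b ^ a + b ^ a := by ring
    refine ⟨(k + 1) * b ^ a - 1, by omega, ?_⟩
    have hN : 0 < (k + 1) * b ^ a - 1 := by omega
    have := ldCount_lower b k hb hk1 hk a ((k + 1) * b ^ a - 1) (by omega)
    generalize (k + 1) * b ^ a - 1 = N at *
    rw [hf, div_le_div_iff₀ hD (by exact_mod_cast hN)]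
    exact this
  have hbdd : Filter.IsBoundedUnder (· ≤ ·) Filter.atTop
      (fun N : ℕ => leadingDigitFreq b N k) := hlim.isBoundedUnder_le.mono_le hup
  have hcob : Filter.IsCoboundedUnder (· ≤ ·) Filter.atTop
      (fun N : ℕ => leadingDigitFreq b N k) :=
    Filter.IsBoundedUnder.isCoboundedUnder_le
      (Filter.isBoundedUnder_of_eventually_ge (a := 0) (Filter.Eventually.of_forall fun N => by
        unfold leadingDigitFreq; positivity))
  apply le_antisymm
  · rw [← hlim.limsup_eq]
    exact Filter.limsup_le_limsup hup hcob hlim.isBoundedUnder_le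
  · exact Filter.le_limsup_of_frequently_le hfreq hbdd
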